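/- Let G = (V, E) be a finite simple loopless biconnected graph (connected and G − v connected for every vertex v) with at least one edge. The following are equivalent: (1) P(G) ∩ 2M(G) = P(G); (2) for every choice of edge weights c with 0 < c_e < ∞ for all e, the resistance curvature satisfies p_v(c) > 0 for all v ∈ V; (3) G is a cycle graph on n ≥ 3 vertices or G is a single edge K₂. -/

import Mathlib

open scoped Classical

namespace RCurv

variable {V : Type*} [Fintype V] [DecidableEq V]

/-- `T` is (the edge set of) a spanning tree of `G`. -/
def IsSpanningTree (G : SimpleGraph V) (T : Finset (Sym2 V)) : Prop :=
  (T : Set (Sym2 V)) ⊆ G.edgeSet ∧ (SimpleGraph.fromEdgeSet (T : Set (Sym2 V))).IsTree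

/-- The finite set of all spanning trees of `G`. -/
noncomputable def spanningTrees (G : SimpleGraph V) : Finset (Finset (Sym2 V)) :=
  Finset.univ.filter fun T => IsSpanningTree G T

/-- The relative resistance `r_e(c)` of an edge `e`. -/
noncomputable def relRes (G : SimpleGraph V) (c : Sym2 V → ℝ) (e : Sym2 V) : ℝ :=
  (∑ T ∈ (spanningTrees G).filter (fun T => e ∈ T), ∏ t ∈ T, c t) /
    (∑ T ∈ spanningTrees G, ∏ t ∈ T, c t)

/-- The resistance curvature `p_v(c)` of a vertex `v`. -/
noncomputable def curv (G : SimpleGraph V) (c : Sym2 V → ℝ) (v : V) : ℝ :=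
  1 - (1 / 2) * ∑ u ∈ G.neighborFinset v, relRes G c s(u, v)

/-- `G` is resistance nonnegative. -/
def IsRN (G : SimpleGraph V) : Prop :=
  ∃ c : Sym2 V → ℝ, (∀ e ∈ G.edgeSet, 0 < c e) ∧ ∀ v : V, 0 ≤ curv G c v

/-- `G` is resistance positive. -/
def IsRP (G : SimpleGraph V) : Prop :=
  ∃ c : Sym2 V → ℝ, (∀ e ∈ G.edgeSet, 0 < c e) ∧ ∀ v : V, 0 < curv G c v

/-- The indicator vector of a finite edge set, as a vector in `ℝ^{Sym2 V}`. -/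
noncomputable def indVec (T : Finset (Sym2 V)) : Sym2 V → ℝ := fun e => if e ∈ T then 1 else 0

/-- The spanning tree polytope `P(G)`. -/
noncomputable def stPolytope (G : SimpleGraph V) : Set (Sym2 V → ℝ) :=
  convexHull ℝ {x | ∃ T ∈ spanningTrees G, x = indVec T}

/-- `M` is a matching of `G`. -/
def IsMatching' (G : SimpleGraph V) (M : Finset (Sym2 V)) : Prop :=
  (M : Set (Sym2 V)) ⊆ G.edgeSet ∧ ∀ v : V, (M.filter fun e => v ∈ e).card ≤ 1

/-- The matching polytope `M(G)`. -/
noncomputable def matchingPolytope (G : SimpleGraph V) : Set (Sym2 V → ℝ) :=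
  convexHull ℝ {x | ∃ M : Finset (Sym2 V), IsMatching' G M ∧ x = indVec M}

/-- A Hamiltonian path: a spanning tree in which every vertex has degree at most `2`. -/
def IsHamPath (G : SimpleGraph V) (H : Finset (Sym2 V)) : Prop :=
  IsSpanningTree G H ∧ ∀ v : V, (H.filter fun e => v ∈ e).card ≤ 2

end RCurv

/-!
Both (1) and (2) say that every spanning tree of `G` is a Hamiltonian path, and since every star of
a connected graph extends to a spanning tree, this means that all degrees of `G` are at most `2`.

For (1), a point of `2M(G)` has coordinate sum at most `2` around every vertex; conversely, a
Hamiltonian path is properly `2`-edge-coloured, and its indicator vector is twice the midpoint of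
those of the two colour classes.

For (2), up to a positive factor `p_v(c)` is the polynomial `∑_T (2 - deg_T v) ∏_{t ∈ T} c_t`, which
by continuity is nonnegative at the indicator vector of a spanning tree `S`, where only the term
`2 - deg_S v` survives. Conversely, if all `deg_T v` are at most `2`, every term is nonnegative, and
a spanning tree with `v` as a leaf, which exists because `G - v` is connected, makes the sum
positive.

Finally, a connected graph with all degrees at most `2` which contains a cycle is that cycle,
whereas an acyclic one has a leaf, whose neighbour is a cut vertex unless `G = K₂`.
-/

namespace RCurv

open Finset SimpleGraph

variable {V : Type*} {G : SimpleGraph V} {v w : V}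

section SpanningTrees

variable {S T : Finset (Sym2 V)}

lemma mem_spanningTrees [Fintype V] : T ∈ spanningTrees G ↔ IsSpanningTree G T := by
  simp [spanningTrees]

lemma isSpanningTree_edgeFinset [Fintype V] {H : SimpleGraph V} (hle : H ≤ G) (hH : H.IsTree) :
    IsSpanningTree G H.edgeFinset := by
  simpa [IsSpanningTree, hH] using hle

lemma IsSpanningTree.edgeSet_fromEdgeSet (hT : IsSpanningTree G T) :
    (fromEdgeSet (T : Set (Sym2 V))).edgeSet = T := by
  rw [SimpleGraph.edgeSet_fromEdgeSet, sdiff_eq_left]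
  exact Set.disjoint_left.2 fun e he ↦ G.not_isDiag_of_mem_edgeSet (hT.1 he)

lemma IsSpanningTree.eq_of_subset (hS : IsSpanningTree G S) (hT : IsSpanningTree G T)
    (hST : S ⊆ T) : S = T := by
  have hle : fromEdgeSet (S : Set (Sym2 V)) ≤ fromEdgeSet T := fromEdgeSet_mono (coe_subset.2 hST)
  rw [← coe_inj, ← hS.edgeSet_fromEdgeSet, ← hT.edgeSet_fromEdgeSet,
    hle.antisymm ((isTree_iff_minimal_connected.1 hT.2).2 hS.2.connected hle)]

lemma spanningTrees_nonempty [Fintype V] (hG : G.Connected) : (spanningTrees G).Nonempty :=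
  have ⟨_, hle, hH⟩ := hG.exists_isTree_le
  ⟨_, mem_spanningTrees.2 (isSpanningTree_edgeFinset hle hH)⟩

lemma connected_deleteIncidenceSet_sup_edge (hvw : G.Adj v w)
    (hv : (G.induce {v}ᶜ).Preconnected) :
    (G.deleteIncidenceSet v ⊔ edge v w).Connected := by
  let φ : G.induce {v}ᶜ →g G.deleteIncidenceSet v ⊔ edge v w :=
    ⟨(↑), fun {a b} hab ↦ .inl (deleteIncidenceSet_adj.2 ⟨hab, a.2, b.2⟩)⟩
  refine (connected_iff_exists_forall_reachable _).2 ⟨w, fun u ↦ ?_⟩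
  by_cases huv : u = v
  · subst huv
    exact Adj.reachable (.inr ((edge_adj ..).2 ⟨.inr ⟨rfl, rfl⟩, hvw.ne'⟩))
  · exact (hv ⟨w, hvw.ne'⟩ ⟨u, huv⟩).map φ

variable [DecidableEq V]

lemma card_filter_mem_edgeFinset (G : SimpleGraph V) (v : V) [Fintype G.edgeSet]
    [Fintype (G.neighborSet v)] :
    #{e ∈ G.edgeFinset | v ∈ e} = G.degree v := by
  rw [← incidenceFinset_eq_filter, card_incidenceFinset_eq_degree]

lemma card_filter_mem_le_degree [Fintype V] (hT : (T : Set (Sym2 V)) ⊆ G.edgeSet) (v : V) :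
    #{e ∈ T | v ∈ e} ≤ G.degree v := by
  rw [← card_filter_mem_edgeFinset]
  exact card_le_card <| filter_subset_filter _ fun e he ↦ mem_edgeFinset.2 (hT he)

lemma forall_isHamPath_iff_degree_le_two [Fintype V] (hG : G.Connected) :
    (∀ T, IsSpanningTree G T → IsHamPath G T) ↔ ∀ v, G.degree v ≤ 2 := by
  refine ⟨fun h v ↦ ?_, fun h T hT ↦
    ⟨hT, fun v ↦ (card_filter_mem_le_degree hT.1 v).trans (h v)⟩⟩
  obtain ⟨H, hstar, hle, hH⟩ := hG.exists_isTree_le_of_le_of_isAcyclic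
    (H := G ⊓ starGraph v) inf_le_left ((isAcyclic_starGraph v).anti inf_le_right)
  calc G.degree v ≤ H.degree v := by
        refine card_le_card fun u hu ↦ ?_
        rw [mem_neighborFinset] at hu ⊢
        exact hstar ⟨hu, by simp [hu.ne]⟩
    _ = #{e ∈ H.edgeFinset | v ∈ e} := (card_filter_mem_edgeFinset H v).symm
    _ ≤ 2 := (h _ (isSpanningTree_edgeFinset hle hH)).2 v

lemma exists_isSpanningTree_card_filter_mem_le_one [Finite V] (hvw : G.Adj v w)
    (hv : (G.induce {v}ᶜ).Preconnected) :
    ∃ T, IsSpanningTree G T ∧ #{e ∈ T | v ∈ e} ≤ 1 := by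
  cases nonempty_fintype V
  obtain ⟨H, hle, hH⟩ := (connected_deleteIncidenceSet_sup_edge hvw hv).exists_isTree_le
  have hleG : H ≤ G :=
    hle.trans <| sup_le (G.deleteIncidenceSet_le v) <| (edge_le_iff G).2 (.inr hvw)
  refine ⟨H.edgeFinset, isSpanningTree_edgeFinset hleG hH, ?_⟩
  rw [card_filter_mem_edgeFinset, ← card_neighborFinset_eq_degree, ← card_singleton w]
  refine card_le_card fun u hu ↦ ?_
  have huv := hle ((mem_neighborFinset ..).1 hu)
  rw [sup_adj, deleteIncidenceSet_adj, edge_adj] at huv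
  obtain ⟨-, h, -⟩ | ⟨⟨-, rfl⟩ | ⟨rfl, -⟩, -⟩ := huv
  · exact absurd rfl h
  · exact mem_singleton_self u
  · exact absurd rfl hvw.ne

end SpanningTrees

section Curvature

variable {S T : Finset (Sym2 V)} {c : Sym2 V → ℝ}

lemma IsSpanningTree.prod_pos (hT : IsSpanningTree G T) (hc : ∀ e ∈ G.edgeSet, 0 < c e) :
    0 < ∏ t ∈ T, c t :=
  Finset.prod_pos fun t ht ↦ hc t (hT.1 ht)

variable [Fintype V]

lemma sum_prod_spanningTrees_pos (hG : G.Connected) (hc : ∀ e ∈ G.edgeSet, 0 < c e) :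
    0 < ∑ T ∈ spanningTrees G, ∏ t ∈ T, c t :=
  sum_pos (fun _ hT ↦ (mem_spanningTrees.1 hT).prod_pos hc) (spanningTrees_nonempty hG)

variable [DecidableEq V]

lemma card_filter_neighborFinset (hT : (T : Set (Sym2 V)) ⊆ G.edgeSet) (v : V) :
    #{u ∈ G.neighborFinset v | s(u, v) ∈ T} = #{e ∈ T | v ∈ e} := by
  refine card_bij (fun u _ ↦ s(u, v)) (fun u hu ↦ ?_) (fun _ _ _ _ ↦ Sym2.congr_left.1) ?_
  · simpa using (mem_filter.1 hu).2
  · intro e he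
    obtain ⟨heT, u, rfl⟩ := mem_filter.1 he
    refine ⟨u, mem_filter.2 ⟨(mem_neighborFinset _ _ _).2 (hT heT), ?_⟩, Sym2.eq_swap⟩
    rwa [Sym2.eq_swap]

/-- The numerator `2 p_v(c) ∑_T ∏_{t ∈ T} c_t` of the resistance curvature. Unlike `curv`, it is a
polynomial in the weights, so it can be evaluated where some of them vanish. -/
noncomputable def curvNum (G : SimpleGraph V) (c : Sym2 V → ℝ) (v : V) : ℝ :=
  ∑ T ∈ spanningTrees G, (2 - (#{e ∈ T | v ∈ e} : ℝ)) * ∏ t ∈ T, c t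

lemma sum_relRes (G : SimpleGraph V) (c : Sym2 V → ℝ) (v : V) :
    ∑ u ∈ G.neighborFinset v, relRes G c s(u, v) =
      (∑ T ∈ spanningTrees G, (#{e ∈ T | v ∈ e} : ℝ) * ∏ t ∈ T, c t) /
        ∑ T ∈ spanningTrees G, ∏ t ∈ T, c t := by
  simp only [relRes]
  rw [← sum_div, sum_comm' (t' := spanningTrees G)
    (s' := fun T ↦ {u ∈ G.neighborFinset v | s(u, v) ∈ T}) (by simp; tauto)]
  refine congrArg (· / _) (sum_congr rfl fun T hT ↦ ?_)
  rw [sum_const, nsmul_eq_mul, card_filter_neighborFinset (mem_spanningTrees.1 hT).1]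

lemma curv_eq_curvNum_div (hG : G.Connected) (hc : ∀ e ∈ G.edgeSet, 0 < c e) (v : V) :
    curv G c v = curvNum G c v / (2 * ∑ T ∈ spanningTrees G, ∏ t ∈ T, c t) := by
  have hZ := sum_prod_spanningTrees_pos hG hc
  rw [curv, sum_relRes, curvNum]
  simp_rw [sub_mul, sum_sub_distrib, ← mul_sum]
  field_simp

lemma curv_pos_iff (hG : G.Connected) (hc : ∀ e ∈ G.edgeSet, 0 < c e) (v : V) :
    0 < curv G c v ↔ 0 < curvNum G c v := by
  have hZ := sum_prod_spanningTrees_pos hG hc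
  rw [curv_eq_curvNum_div hG hc, div_pos_iff_of_pos_right (by positivity)]

lemma continuous_curvNum (G : SimpleGraph V) (v : V) : Continuous fun c ↦ curvNum G c v := by
  unfold curvNum
  fun_prop

lemma curvNum_indVec (hS : IsSpanningTree G S) (v : V) :
    curvNum G (indVec S) v = 2 - #{e ∈ S | v ∈ e} := by
  rw [curvNum, sum_eq_single_of_mem S (mem_spanningTrees.2 hS)]
  · rw [prod_eq_one fun t ht ↦ by simp [indVec, ht], mul_one]
  · intro T hT hTS
    obtain ⟨t, htT, htS⟩ := not_subset.1 fun h ↦ hTS ((mem_spanningTrees.1 hT).eq_of_subset hS h)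
    rw [prod_eq_zero htT (by simp [indVec, htS]), mul_zero]

lemma curvNum_nonneg_of_forall_curv_pos (hG : G.Connected)
    (h : ∀ c : Sym2 V → ℝ, (∀ e ∈ G.edgeSet, 0 < c e) → 0 < curv G c v) (hc : 0 ≤ c) :
    0 ≤ curvNum G c v := by
  have hpos : ∀ c ∈ Set.univ.pi fun _ : Sym2 V ↦ Set.Ioi (0 : ℝ), 0 ≤ curvNum G c v :=
    fun c hc ↦ ((curv_pos_iff hG (fun e _ ↦ hc e trivial) v).1 (h c fun e _ ↦ hc e trivial)).le
  have hclosed : IsClosed {c | 0 ≤ curvNum G c v} :=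
    isClosed_Ici.preimage (continuous_curvNum G v)
  refine closure_minimal hpos hclosed ?_
  rw [closure_pi_set]
  exact fun e _ ↦ by simpa using hc e

lemma isHamPath_of_forall_curv_pos (hG : G.Connected)
    (h : ∀ c : Sym2 V → ℝ, (∀ e ∈ G.edgeSet, 0 < c e) → ∀ v, 0 < curv G c v)
    (hS : IsSpanningTree G S) : IsHamPath G S := by
  refine ⟨hS, fun v ↦ ?_⟩
  have hnonneg : 0 ≤ curvNum G (indVec S) v :=
    curvNum_nonneg_of_forall_curv_pos hG (fun c hc ↦ h c hc v) fun e ↦ by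
      unfold indVec; split_ifs <;> simp
  rw [curvNum_indVec hS, sub_nonneg] at hnonneg
  exact_mod_cast hnonneg

lemma forall_curv_pos_iff_degree_le_two [Nontrivial V]
    (hG : G.Connected) (hbi : ∀ v, (G.induce {v}ᶜ).Preconnected) :
    (∀ c : Sym2 V → ℝ, (∀ e ∈ G.edgeSet, 0 < c e) → ∀ v, 0 < curv G c v) ↔
      ∀ v, G.degree v ≤ 2 := by
  rw [← forall_isHamPath_iff_degree_le_two hG]
  refine ⟨fun h T ↦ isHamPath_of_forall_curv_pos hG h, fun h c hc v ↦ ?_⟩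
  obtain ⟨w, hvw⟩ := hG.preconnected.exists_adj_of_nontrivial v
  obtain ⟨S, hS, hSv⟩ := exists_isSpanningTree_card_filter_mem_le_one hvw (hbi v)
  rw [curv_pos_iff hG hc]
  refine sum_pos' (fun T hT ↦ ?_) ⟨S, mem_spanningTrees.2 hS, ?_⟩
  · have hT := mem_spanningTrees.1 hT
    have hTv : (#{e ∈ T | v ∈ e} : ℝ) ≤ 2 := mod_cast (h T hT).2 v
    exact mul_nonneg (sub_nonneg.2 hTv) (hT.prod_pos hc).le
  · have hSv : (#{e ∈ S | v ∈ e} : ℝ) ≤ 1 := mod_cast hSv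
    exact mul_pos (by linarith) (hS.prod_pos hc)

end Curvature

section EdgeColoring

lemma exists_degree_eq_one_of_isAcyclic [Fintype V] (hG : G.IsAcyclic) (hne : G ≠ ⊥) :
    ∃ v, G.degree v = 1 := by
  obtain ⟨a, b, hab⟩ := ne_bot_iff_exists_adj.1 hne
  set K := G.connectedComponentMk a
  have hbK : b ∈ K.supp := (ConnectedComponent.eq.2 hab.reachable).symm
  have : Nontrivial K := ⟨⟨a, rfl⟩, ⟨b, hbK⟩, fun h ↦ hab.ne (congrArg Subtype.val h)⟩
  obtain ⟨⟨v, hv⟩, hdeg⟩ := (hG.isTree_connectedComponent K).exists_vert_degree_one_of_nontrivial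
  refine ⟨v, ?_⟩
  have hnbr : G.neighborSet v ⊆ K.supp := fun u hu ↦ (K.mem_supp_congr_adj hu).1 hv
  rw [← hdeg, ← degree_induce_of_neighborSet_subset (v := ⟨v, hv⟩) hnbr]
  rfl

lemma degree_lt_of_le_of_adj_of_not_adj {H : SimpleGraph V} [Fintype (H.neighborSet v)]
    [Fintype (G.neighborSet v)] (hle : H ≤ G) (hG : G.Adj v w) (hH : ¬H.Adj v w) :
    H.degree v < G.degree v := by
  refine card_lt_card <| (ssubset_iff_of_subset fun u hu ↦ ?_).2 ⟨w, by simpa using hG, by simpa⟩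
  simpa using hle ((mem_neighborFinset ..).1 hu)

/-- `C` is a proper edge colouring of `G`: edges sharing a vertex get different colours. The values
of `C` on the pairs which are not edges of `G` are irrelevant. -/
def IsProperEdgeColoring {α : Type*} (G : SimpleGraph V) (C : Sym2 V → α) : Prop :=
  ∀ v, Set.InjOn C (G.incidenceSet v)

lemma IsProperEdgeColoring.update {α : Type*} [DecidableEq V] {C : Sym2 V → α} {e : Sym2 V} {k : α}
    (hC : IsProperEdgeColoring (G.deleteEdges {e}) C)
    (hk : ∀ u ∈ e, ∀ f ∈ (G.deleteEdges {e}).incidenceSet u, C f ≠ k) :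
    IsProperEdgeColoring G (Function.update C e k) := by
  intro u
  have hdel : ∀ f ∈ G.incidenceSet u, f ≠ e → f ∈ (G.deleteEdges {e}).incidenceSet u :=
    fun f hf hfe ↦ ⟨by rw [edgeSet_deleteEdges]; exact ⟨hf.1, hfe⟩, hf.2⟩
  intro f hf g hg hfg
  by_cases hfe : f = e <;> by_cases hge : g = e
  · exact hfe.trans hge.symm
  · subst hfe
    exact absurd (by simpa [hge] using hfg.symm) (hk u hf.2 g (hdel g hg hge))
  · subst hge
    exact absurd (by simpa [hfe] using hfg) (hk u hg.2 f (hdel f hf hfe))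
  · exact hC u (hdel f hf hfe) (hdel g hg hge) (by simpa [hfe, hge] using hfg)

-- Remove a leaf edge, colour the rest, and give the leaf edge a colour missing at its inner end.
lemma exists_isProperEdgeColoring_of_isAcyclic {α : Type*} [Fintype α] [Nonempty α] [Fintype V]
    (hG : G.IsAcyclic) (hdeg : ∀ v, G.degree v ≤ Fintype.card α) :
    ∃ C : Sym2 V → α, IsProperEdgeColoring G C := by
  induction G using WellFoundedLT.induction with | ind G ih
  obtain rfl | hne := eq_or_ne G ⊥
  · exact ⟨fun _ ↦ Classical.arbitrary α, fun v ↦ by simp [incidenceSet]⟩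
  obtain ⟨v, hv⟩ := exists_degree_eq_one_of_isAcyclic hG hne
  obtain ⟨w, hvw, hw⟩ := degree_eq_one_iff_existsUnique_adj.1 hv
  obtain ⟨H, hH⟩ : ∃ H, H = G.deleteEdges {s(v, w)} := ⟨_, rfl⟩
  have hle : H ≤ G := hH ▸ G.deleteEdges_le _
  have hvwH : s(v, w) ∉ H.edgeSet := by simp [hH]
  have hlt : H < G := hle.lt_of_ne fun h ↦ hvwH (h ▸ hvw)
  obtain ⟨C, hC⟩ := ih H hlt (hG.anti hle) fun u ↦ (degree_le_of_le hle).trans (hdeg u)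
  obtain ⟨k, -, hk⟩ : ∃ k ∈ univ, k ∉ (H.incidenceFinset w).image C := by
    refine exists_mem_notMem_of_card_lt_card ?_
    calc #((H.incidenceFinset w).image C) ≤ #(H.incidenceFinset w) := card_image_le
      _ = H.degree w := H.card_incidenceFinset_eq_degree w
      _ < G.degree w := degree_lt_of_le_of_adj_of_not_adj hle hvw.symm fun h ↦ hvwH h.symm
      _ ≤ #univ := hdeg w
  subst hH
  refine ⟨Function.update C s(v, w) k, hC.update fun u hu f hf hfk ↦ ?_⟩
  obtain rfl | rfl := Sym2.mem_iff.1 hu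
  · obtain ⟨x, rfl⟩ := hf.2
    have hux := hf.1
    rw [mem_edgeSet, deleteEdges_adj] at hux
    exact hux.2 (by rw [hw x hux.1]; rfl)
  · exact hk (mem_image.2 ⟨f, by simpa using hf, hfk⟩)

end EdgeColoring

section Polytopes

open scoped Pointwise

variable {T : Finset (Sym2 V)} [DecidableEq V]

lemma IsSpanningTree.degree_fromEdgeSet (hT : IsSpanningTree G T) (v : V)
    [Fintype ((fromEdgeSet (T : Set (Sym2 V))).neighborSet v)] :
    (fromEdgeSet (T : Set (Sym2 V))).degree v = #{e ∈ T | v ∈ e} := by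
  rw [← card_filter_mem_edgeFinset]
  congr 2
  rw [← coe_inj, coe_edgeFinset, hT.edgeSet_fromEdgeSet]

lemma IsSpanningTree.isMatching'_filter {α : Type*} [DecidableEq α] {C : Sym2 V → α}
    (hT : IsSpanningTree G T) (hC : IsProperEdgeColoring (fromEdgeSet (T : Set (Sym2 V))) C)
    (i : α) :
    IsMatching' G {e ∈ T | C e = i} := by
  refine ⟨fun e he ↦ hT.1 (mem_filter.1 he).1, fun v ↦ card_le_one.2 fun e he f hf ↦ ?_⟩
  simp only [mem_filter] at he hf
  have mem_incidenceSet : ∀ e ∈ T, v ∈ e → e ∈ (fromEdgeSet (T : Set (Sym2 V))).incidenceSet v :=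
    fun e he hv ↦ ⟨by rwa [hT.edgeSet_fromEdgeSet], hv⟩
  exact hC v (mem_incidenceSet e he.1.1 he.2) (mem_incidenceSet f hf.1.1 hf.2)
    (he.1.2.trans hf.1.2.symm)

lemma IsHamPath.indVec_mem_smul_matchingPolytope [Finite V] (hT : IsHamPath G T) :
    indVec T ∈ (2 : ℝ) • matchingPolytope G := by
  cases nonempty_fintype V
  obtain ⟨C, hC⟩ := exists_isProperEdgeColoring_of_isAcyclic (α := Bool) hT.1.2.isAcyclic
    fun v ↦ by
      rw [hT.1.degree_fromEdgeSet, Fintype.card_bool]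
      exact hT.2 v
  have hclass : ∀ b, indVec {e ∈ T | C e = b} ∈ matchingPolytope G := fun b ↦
    subset_convexHull ℝ _ ⟨_, hT.1.isMatching'_filter hC b, rfl⟩
  have hconvex : Convex ℝ (matchingPolytope G) := convex_convexHull ℝ _
  refine ⟨_, hconvex.midpoint_mem (hclass true) (hclass false), ?_⟩
  ext e
  by_cases he : e ∈ T <;> cases hCe : C e <;> simp [midpoint_eq_smul_add, indVec, he, hCe]

lemma sum_filter_mem_indVec [Fintype V] (M : Finset (Sym2 V)) (v : V) :
    ∑ e with v ∈ e, indVec M e = #{e ∈ M | v ∈ e} := by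
  rw [← filter_univ_mem M]
  simp only [indVec, mem_filter_univ, sum_boole, filter_filter, and_comm]

lemma sum_filter_mem_le_one [Fintype V] {x : Sym2 V → ℝ} (hx : x ∈ matchingPolytope G) (v : V) :
    ∑ e with v ∈ e, x e ≤ 1 := by
  let φ : (Sym2 V → ℝ) →ₗ[ℝ] ℝ := ∑ e with v ∈ e, LinearMap.proj e
  have hφ : ∀ x, φ x = ∑ e with v ∈ e, x e := fun x ↦ by simp [φ]
  have hle : matchingPolytope G ⊆ {x | φ x ≤ 1} := by
    refine convexHull_min ?_ (convex_halfSpace_le φ.isLinear 1)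
    rintro _ ⟨M, hM, rfl⟩
    rw [Set.mem_ofPred_eq, hφ, sum_filter_mem_indVec]
    exact_mod_cast hM.2 v
  exact hφ x ▸ hle hx

lemma isHamPath_of_indVec_mem_smul_matchingPolytope [Finite V]
    (hT : IsSpanningTree G T) (h : indVec T ∈ (2 : ℝ) • matchingPolytope G) : IsHamPath G T := by
  cases nonempty_fintype V
  refine ⟨hT, fun v ↦ ?_⟩
  obtain ⟨x, hx, hxT⟩ := h
  have hle : ∑ e with v ∈ e, indVec T e ≤ 2 := by
    simpa [← hxT, ← mul_sum] using sum_filter_mem_le_one hx v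
  rw [sum_filter_mem_indVec] at hle
  exact_mod_cast hle

lemma stPolytope_inter_eq_iff_forall_isHamPath [Fintype V] (G : SimpleGraph V) :
    stPolytope G ∩ (2 : ℝ) • matchingPolytope G = stPolytope G ↔
      ∀ T, IsSpanningTree G T → IsHamPath G T := by
  rw [Set.inter_eq_left]
  refine ⟨fun h T hT ↦ isHamPath_of_indVec_mem_smul_matchingPolytope hT <|
    h <| subset_convexHull ℝ _ ⟨T, mem_spanningTrees.2 hT, rfl⟩, fun h ↦
    convexHull_min ?_ ((convex_convexHull ℝ _).smul 2)⟩
  rintro _ ⟨T, hT, rfl⟩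
  exact (h T (mem_spanningTrees.1 hT)).indVec_mem_smul_matchingPolytope

end Polytopes

section Classification

variable {W : Type*} {H : SimpleGraph W}

lemma exists_adj_of_degree_le (f : Copy H G) {i : W} [Fintype (H.neighborSet i)]
    [Fintype (G.neighborSet (f i))] (hdeg : G.degree (f i) ≤ H.degree i) (hv : G.Adj (f i) v) :
    ∃ j, H.Adj i j ∧ f j = v := by
  have hsub : (H.neighborFinset i).map f.toEmbedding ⊆ G.neighborFinset (f i) := by
    intro x hx
    obtain ⟨j, hj, rfl⟩ := mem_map.1 hx
    exact (mem_neighborFinset ..).2 (f.toHom.map_adj ((mem_neighborFinset ..).1 hj))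
  have heq := eq_of_subset_of_card_le hsub (by simpa using hdeg)
  obtain ⟨j, hj, hjv⟩ := mem_map.1 (heq ▸ (mem_neighborFinset ..).2 hv)
  exact ⟨j, (mem_neighborFinset ..).1 hj, hjv⟩

lemma nonempty_iso_of_copy [Nonempty W] [H.LocallyFinite] [G.LocallyFinite]
    (hG : G.Preconnected) (f : Copy H G) (hdeg : ∀ i, G.degree (f i) ≤ H.degree i) :
    Nonempty (H ≃g G) := by
  have hsurj : Function.Surjective f := by
    have hwalk : ∀ {x y}, G.Walk x y → x ∈ Set.range f → y ∈ Set.range f := by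
      intro x y p
      induction p with
      | nil => exact id
      | cons hadj _ ih =>
        rintro ⟨i, rfl⟩
        obtain ⟨j, -, hj⟩ := exists_adj_of_degree_le f (hdeg i) hadj
        exact ih ⟨j, hj⟩
    obtain ⟨i⟩ := ‹Nonempty W›
    exact fun u ↦ hwalk (hG (f i) u).some ⟨i, rfl⟩
  refine ⟨⟨Equiv.ofBijective f ⟨f.injective, hsurj⟩, fun {i j} ↦ ⟨fun h ↦ ?_, f.toHom.map_adj⟩⟩⟩
  obtain ⟨k, hik, hkj⟩ := exists_adj_of_degree_le f (hdeg i) h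
  rwa [← f.injective hkj]

lemma nonempty_iso_cycleGraph_of_degree_le_two [G.LocallyFinite] (hG : G.Preconnected)
    (hcycle : ¬G.IsAcyclic) (hdeg : ∀ v, G.degree v ≤ 2) :
    ∃ n, 3 ≤ n ∧ Nonempty (G ≃g cycleGraph n) := by
  simp only [isAcyclic_iff_free_cycleGraph, not_forall, not_free] at hcycle
  obtain ⟨n, hn, ⟨f⟩⟩ := hcycle
  obtain ⟨m, rfl⟩ := Nat.exists_eq_add_of_le' hn
  obtain ⟨g⟩ := nonempty_iso_of_copy hG f fun i ↦ (hdeg _).trans cycleGraph_degree_three_le.ge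
  exact ⟨m + 3, hn, ⟨g.symm⟩⟩

lemma nonempty_iso_top_fin_two_of_degree_eq_one [Fintype V] (hv : G.degree v = 1)
    (hbi : ∀ w, (G.induce {w}ᶜ).Preconnected) : Nonempty (G ≃g (⊤ : SimpleGraph (Fin 2))) := by
  obtain ⟨w, hvw, hw⟩ := degree_eq_one_iff_existsUnique_adj.1 hv
  have hVw : ∀ u, u = v ∨ u = w := by
    by_contra! ⟨u, huv, huw⟩
    let v' : ({w}ᶜ : Set V) := ⟨v, hvw.ne⟩
    have : Nontrivial ({w}ᶜ : Set V) := ⟨v', ⟨u, huw⟩, fun h ↦ huv (congrArg Subtype.val h).symm⟩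
    obtain ⟨⟨x, hxw⟩, hvx⟩ := (hbi w).exists_adj_of_nontrivial v'
    exact hxw (hw x hvx)
  have htop : G = ⊤ := by
    ext a b
    have hwv := hvw.symm
    obtain rfl | rfl := hVw a <;> obtain rfl | rfl := hVw b <;> simp [*, G.ne_of_adj]
  have hcard : Fintype.card V = 2 := by
    rw [← card_univ, ← card_pair hvw.ne]
    exact congrArg card (Finset.ext fun u ↦ by simpa using hVw u)
  subst htop
  exact ⟨Iso.completeGraph (Fintype.equivFinOfCardEq hcard)⟩

lemma degree_le_two_iff_nonempty_iso [Fintype V] [Nontrivial V] (hG : G.Connected)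
    (hbi : ∀ v, (G.induce {v}ᶜ).Preconnected) :
    (∀ v, G.degree v ≤ 2) ↔ (∃ n, 3 ≤ n ∧ Nonempty (G ≃g cycleGraph n)) ∨
      Nonempty (G ≃g (⊤ : SimpleGraph (Fin 2))) := by
  constructor
  · intro hdeg
    by_cases hA : G.IsAcyclic
    · obtain ⟨v, hv⟩ := IsTree.exists_vert_degree_one_of_nontrivial ⟨hG, hA⟩
      exact .inr (nonempty_iso_top_fin_two_of_degree_eq_one hv hbi)
    · exact .inl (nonempty_iso_cycleGraph_of_degree_le_two hG.preconnected hA hdeg)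
  · rintro (⟨n, hn, ⟨f⟩⟩ | ⟨⟨f⟩⟩) v
    · obtain ⟨m, rfl⟩ := Nat.exists_eq_add_of_le' hn
      rw [← f.degree_eq, cycleGraph_degree_three_le]
    · rw [← f.degree_eq]
      exact (degree_lt_card_verts _).le

end Classification

end RCurv

open scoped Pointwise in
open RCurv in
/-- For a biconnected graph `G` with at least one edge, the following are equivalent:
(1) `P(G) ∩ 2M(G) = P(G)`; (2) every choice of positive edge weights has everywhere positive
resistance curvature; (3) `G` is a cycle graph on `n ≥ 3` vertices or a single edge `K₂`. -/
theorem TDM_eq_stPolytope_iff {V : Type*} [Fintype V] [DecidableEq V]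
    (G : SimpleGraph V) (hG : G.Connected)
    (hbi : ∀ v : V, (G.induce ({v}ᶜ : Set V)).Connected)
    (hE : G.edgeSet.Nonempty) :
    ((stPolytope G ∩ (2 : ℝ) • matchingPolytope G = stPolytope G) ↔
        (∀ c : Sym2 V → ℝ, (∀ e ∈ G.edgeSet, 0 < c e) → ∀ v : V, 0 < curv G c v)) ∧
      ((∀ c : Sym2 V → ℝ, (∀ e ∈ G.edgeSet, 0 < c e) → ∀ v : V, 0 < curv G c v) ↔
        ((∃ n : ℕ, 3 ≤ n ∧ Nonempty (G ≃g SimpleGraph.cycleGraph n)) ∨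
          Nonempty (G ≃g (⊤ : SimpleGraph (Fin 2))))) := by
  have : Nontrivial V := by
    obtain ⟨⟨a, b⟩, hab⟩ := hE
    exact ⟨a, b, hab.ne⟩
  have hpolytope := (stPolytope_inter_eq_iff_forall_isHamPath G).trans
    (forall_isHamPath_iff_degree_le_two hG)
  have hbi' := fun v ↦ (hbi v).preconnected
  have hcurv := forall_curv_pos_iff_degree_le_two hG hbi'
  exact ⟨hpolytope.trans hcurv.symm, hcurv.trans (degree_le_two_iff_nonempty_iso hG hbi')⟩
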